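/- The group S is torsion-free: every element of S of finite order is the identity. -/

import Mathlib

noncomputable section

/-- The two relators of the Soelberg group `S = ⟨x, y | (xy)²(xy⁻¹)², (yx)²(yx⁻¹)²⟩`. -/
def Srels : Set (FreeGroup (Fin 2)) :=
  {(FreeGroup.of 0 * FreeGroup.of 1) ^ 2 * (FreeGroup.of 0 * (FreeGroup.of 1)⁻¹) ^ 2,
   (FreeGroup.of 1 * FreeGroup.of 0) ^ 2 * (FreeGroup.of 1 * (FreeGroup.of 0)⁻¹) ^ 2}

/-- The Soelberg group. -/
abbrev S : Type := PresentedGroup Srels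

def sx : S := PresentedGroup.of 0
def sy : S := PresentedGroup.of 1

/-- The permutation of `ℤ³` by which `x` acts. -/
def px : Equiv.Perm (ℤ × ℤ × ℤ) where
  toFun v := (-v.1 + 2 * v.2.2, v.2.1 + 1, -v.2.2)
  invFun v := (-v.1 - 2 * v.2.2, v.2.1 - 1, -v.2.2)
  left_inv := by rintro ⟨i, j, k⟩; ext <;> simp
  right_inv := by rintro ⟨i, j, k⟩; ext <;> simp

/-- The permutation of `ℤ³` by which `y` acts. -/
def py : Equiv.Perm (ℤ × ℤ × ℤ) where
  toFun v := (-v.1 + 2 * v.2.2 + 1, -v.2.1 - 1, v.2.2 + 1)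
  invFun v := (-v.1 + 2 * v.2.2 - 1, -v.2.1 - 1, v.2.2 - 1)
  left_inv := by rintro ⟨i, j, k⟩; ext <;> simp <;> ring
  right_inv := by rintro ⟨i, j, k⟩; ext <;> simp <;> ring

lemma px_apply (i j k : ℤ) : px (i, j, k) = (-i + 2 * k, j + 1, -k) := rfl
lemma py_apply (i j k : ℤ) : py (i, j, k) = (-i + 2 * k + 1, -j - 1, k + 1) := rfl
lemma px_inv_apply (i j k : ℤ) : px⁻¹ (i, j, k) = (-i - 2 * k, j - 1, -k) := rfl
lemma py_inv_apply (i j k : ℤ) : py⁻¹ (i, j, k) = (-i + 2 * k - 1, -j - 1, k - 1) := rfl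

lemma prel1 : (px * py) ^ 2 * (px * py⁻¹) ^ 2 = 1 := by
  apply Equiv.ext
  rintro ⟨i, j, k⟩
  simp only [pow_two, Equiv.Perm.mul_apply, px_apply, py_apply, py_inv_apply,
    Equiv.Perm.one_apply, Prod.mk.injEq]
  refine ⟨?_, ?_, ?_⟩ <;> ring

lemma prel2 : (py * px) ^ 2 * (py * px⁻¹) ^ 2 = 1 := by
  apply Equiv.ext
  rintro ⟨i, j, k⟩
  simp only [pow_two, Equiv.Perm.mul_apply, px_apply, py_apply, px_inv_apply,
    Equiv.Perm.one_apply, Prod.mk.injEq]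
  refine ⟨?_, ?_, ?_⟩ <;> ring

/-- The action of `S` on `ℤ³`. -/
def phi : S →* Equiv.Perm (ℤ × ℤ × ℤ) :=
  PresentedGroup.toGroup (f := ![px, py]) (by
    intro r hr
    rcases hr with rfl | rfl
    · simp only [map_mul, map_pow, map_inv, FreeGroup.lift_apply_of]
      exact prel1
    · simp only [map_mul, map_pow, map_inv, FreeGroup.lift_apply_of]
      exact prel2)

lemma phi_x : phi sx = px := by simp [phi, sx]
lemma phi_y : phi sy = py := by simp [phi, sy]

lemma S_induction (P : S → Prop) (h1 : P 1) (hx : ∀ g, P g → P (sx * g))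
    (hx' : ∀ g, P g → P (sx⁻¹ * g)) (hy : ∀ g, P g → P (sy * g))
    (hy' : ∀ g, P g → P (sy⁻¹ * g)) (g : S) : P g := by
  have hg : g ∈ Subgroup.closure (Set.range (PresentedGroup.of : Fin 2 → S)) := by
    rw [PresentedGroup.closure_range_of]; trivial
  induction hg using Subgroup.closure_induction_left with
  | one => exact h1
  | mul_left a ha b _ hb =>
    obtain ⟨n, rfl⟩ := ha
    fin_cases n
    · exact hx _ hb
    · exact hy _ hb
  | inv_mul_cancel a ha b _ hb =>
    obtain ⟨n, rfl⟩ := ha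
    fin_cases n
    · exact hx' _ hb
    · exact hy' _ hb

/-- Explicit form of the action with parity constraints. -/
def Good (g : S) : Prop := ∃ s t A B C D : ℤ,
  (s = 1 ∧ C % 2 = 0 ∨ s = -1 ∧ C % 2 = 1) ∧ (t = 1 ∧ D % 2 = 0 ∨ t = -1 ∧ D % 2 = 1) ∧
  (B - D) % 2 = 0 ∧ (A - 2 * C) % 4 = 0 ∧
  ∀ i j k : ℤ, phi g (i, j, k) = (s * i + A * k + B, t * j + C, s * t * k + D)

lemma good_all (g : S) : Good g := by
  refine S_induction Good ?_ ?_ ?_ ?_ ?_ g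
  · exact ⟨1, 1, 0, 0, 0, 0, by simp, by simp, by simp, by simp, by simp⟩
  · rintro g ⟨s, t, A, B, C, D, hs, ht, hB, hA, h⟩
    refine ⟨-s, t, -A + 2 * (s * t), -B + 2 * D, C + 1, -D, by omega, by omega, by omega, ?_, ?_⟩
    · rcases hs with ⟨rfl, _⟩ | ⟨rfl, _⟩ <;> rcases ht with ⟨rfl, _⟩ | ⟨rfl, _⟩ <;> omega
    · intro i j k
      rw [map_mul, phi_x, Equiv.Perm.mul_apply, h, px_apply]
      ext <;> simp <;> ring
  · rintro g ⟨s, t, A, B, C, D, hs, ht, hB, hA, h⟩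
    refine ⟨-s, t, -A - 2 * (s * t), -B - 2 * D, C - 1, -D, by omega, by omega, by omega, ?_, ?_⟩
    · rcases hs with ⟨rfl, _⟩ | ⟨rfl, _⟩ <;> rcases ht with ⟨rfl, _⟩ | ⟨rfl, _⟩ <;> omega
    · intro i j k
      rw [map_mul, map_inv, phi_x, Equiv.Perm.mul_apply, h, px_inv_apply]
      ext <;> simp <;> ring
  · rintro g ⟨s, t, A, B, C, D, hs, ht, hB, hA, h⟩
    refine ⟨-s, -t, -A + 2 * (s * t), -B + 2 * D + 1, -C - 1, D + 1,
      by omega, by omega, by omega, ?_, ?_⟩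
    · rcases hs with ⟨rfl, _⟩ | ⟨rfl, _⟩ <;> rcases ht with ⟨rfl, _⟩ | ⟨rfl, _⟩ <;> omega
    · intro i j k
      rw [map_mul, phi_y, Equiv.Perm.mul_apply, h, py_apply]
      ext <;> simp <;> ring
  · rintro g ⟨s, t, A, B, C, D, hs, ht, hB, hA, h⟩
    refine ⟨-s, -t, -A + 2 * (s * t), -B + 2 * D - 1, -C - 1, D - 1,
      by omega, by omega, by omega, ?_, ?_⟩
    · rcases hs with ⟨rfl, _⟩ | ⟨rfl, _⟩ <;> rcases ht with ⟨rfl, _⟩ | ⟨rfl, _⟩ <;> omega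
    · intro i j k
      rw [map_mul, map_inv, phi_y, Equiv.Perm.mul_apply, h, py_inv_apply]
      ext <;> simp <;> ring

lemma drift {X : Type*} (h : Equiv.Perm X) (hh : IsOfFinOrder h) (f c : X → ℤ)
    (hf : ∀ v, f (h v) = f v + c v) (hc : ∀ v, c (h v) = c v) (v : X) : c v = 0 := by
  obtain ⟨n, hn, hpow⟩ := isOfFinOrder_iff_pow_eq_one.1 hh
  have key : ∀ m : ℕ, f ((h ^ m) v) = f v + m * c v ∧ c ((h ^ m) v) = c v := by
    intro m
    induction m with
    | zero => simp
    | succ m ih =>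
      rw [pow_succ', Equiv.Perm.mul_apply, hf, hc, ih.1, ih.2]
      refine ⟨?_, rfl⟩
      push_cast; ring
  have := (key n).1
  rw [hpow] at this
  simp at this
  omega

lemma phi_torsion (g : S) (hg : IsOfFinOrder (phi g)) : phi g = 1 := by
  obtain ⟨s, t, A, B, C, D, hs, ht, hB, hA, h⟩ := good_all g
  have hg2 : IsOfFinOrder (phi g ^ 2) := hg.pow
  have h2 : ∀ i j k : ℤ, (phi g ^ 2) (i, j, k) =
      (s * (s * i + A * k + B) + A * (s * t * k + D) + B, t * (t * j + C) + C,
        s * t * (s * t * k + D) + D) := by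
    intro i j k
    rw [pow_two, Equiv.Perm.mul_apply, h, h]
  rcases hs with ⟨rfl, hs⟩ | ⟨rfl, hs⟩ <;> rcases ht with ⟨rfl, ht⟩ | ⟨rfl, ht⟩
  · have hD := drift _ hg (fun v => v.2.2) (fun _ => D)
      (by rintro ⟨i, j, k⟩; simp [h]) (by simp) (0, 0, 0)
    have hC := drift _ hg (fun v => v.2.1) (fun _ => C)
      (by rintro ⟨i, j, k⟩; simp [h]) (by simp) (0, 0, 0)
    subst hD hC
    have hE := drift _ hg (fun v => v.1) (fun v => A * v.2.2 + B)
      (by rintro ⟨i, j, k⟩; simp [h]; ring) (by rintro ⟨i, j, k⟩; simp [h])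
    have h0 := hE (0, 0, 0)
    have h1 := hE (0, 0, 1)
    simp only at h0 h1
    have hB0 : B = 0 := by omega
    have hA0 : A = 0 := by omega
    subst hB0 hA0
    ext ⟨i, j, k⟩ <;> simp [h]
  · have := drift _ hg2 (fun v => v.1) (fun _ => 2 * B + A * D)
      (by rintro ⟨i, j, k⟩; simp only [h2]; ring) (by simp) (0, 0, 0)
    obtain ⟨a, rfl⟩ : ∃ a, A = 4 * a := ⟨A / 4, by omega⟩
    rw [mul_assoc] at this
    omega
  · have := drift _ hg2 (fun v => v.2.1) (fun _ => 2 * C)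
      (by rintro ⟨i, j, k⟩; simp only [h2]; ring) (by simp) (0, 0, 0)
    omega
  · have := drift _ hg2 (fun v => v.2.2) (fun _ => 2 * D)
      (by rintro ⟨i, j, k⟩; simp only [h2]; ring) (by simp) (0, 0, 0)
    omega

lemma rel1 : (sx * sy) ^ 2 * (sx * sy⁻¹) ^ 2 = 1 :=
  PresentedGroup.one_of_mem (rels := Srels) (Set.mem_insert _ _)

lemma rel2 : (sy * sx) ^ 2 * (sy * sx⁻¹) ^ 2 = 1 :=
  PresentedGroup.one_of_mem (rels := Srels) (Set.mem_insert_of_mem _ rfl)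

/-- Structure relations, in an arbitrary group. -/
lemma struct {G : Type*} [Group G] (x y : G) (h1 : (x * y) ^ 2 * (x * y⁻¹) ^ 2 = 1)
    (h2 : (y * x) ^ 2 * (y * x⁻¹) ^ 2 = 1) (u t : G) (hu : u = (x * y) ^ 2) (ht : t = x ^ 2) :
    x * u = u⁻¹ * x ∧ y * u = u⁻¹ * y ∧ x * t = t * x ∧ y * t = u⁻¹ * u⁻¹ * t⁻¹ * y ∧
    u * t = t * u ∧ y * x = u⁻¹ * t⁻¹ * x * y⁻¹ := by
  have e1 : u = (y * x⁻¹) ^ 2 := by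
    rw [hu, mul_eq_one_iff_eq_inv.1 h1, ← inv_pow]; simp
  have e2 : (y * x) ^ 2 = u⁻¹ := by
    rw [mul_eq_one_iff_eq_inv.1 h2, e1]
  have xu' : u * x = x * u⁻¹ := by
    rw [← e2, hu]; simp only [pow_two, mul_assoc]
  have yu : y * u = u⁻¹ * y := by
    rw [← e2, hu]; simp only [pow_two, mul_assoc]
  have xu : x * u = u⁻¹ * x := by
    have : u⁻¹ * (u * x) * u = u⁻¹ * (x * u⁻¹) * u := by rw [xu']
    simpa [mul_assoc] using this
  have xt : x * t = t * x := by rw [ht]; group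
  have ut : u * t = t * u := by
    rw [ht, pow_two, ← mul_assoc, xu', mul_assoc, mul_assoc]
    congr 1
    rw [xu]
  have yx0 : y * x = u⁻¹ * (x⁻¹ * y⁻¹) := by
    rw [← e2]; simp [pow_two, mul_assoc]
  have yx : y * x = u⁻¹ * t⁻¹ * x * y⁻¹ := by
    rw [yx0, ht]; simp [pow_two, mul_assoc]
  refine ⟨xu, yu, xt, ?_, ut, yx⟩
  have xiu : x⁻¹ * u = u⁻¹ * x⁻¹ := by
    rw [inv_mul_eq_iff_eq_mul, ← mul_assoc, ← xu', mul_assoc]; simp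
  have e3 : u⁻¹ = x⁻¹ * y * (x⁻¹ * y) := by
    have : x⁻¹ * u * x = u⁻¹ := by rw [xiu]; simp
    rw [← this, e1]; simp [pow_two, mul_assoc]
  have e4 : y⁻¹ * x = u * (x⁻¹ * y) := by
    rw [← inv_inv u, e3]; simp [mul_assoc]
  calc y * t = (y * x) * x := by rw [ht, pow_two, mul_assoc]
    _ = u⁻¹ * x⁻¹ * (y⁻¹ * x) := by rw [yx0]; simp only [mul_assoc]
    _ = u⁻¹ * (x⁻¹ * u) * (x⁻¹ * y) := by rw [e4]; simp only [mul_assoc]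
    _ = _ := by rw [xiu, ht]; simp [pow_two, mul_assoc]

/-- Conjugation relations propagate to powers of the commuting elements `u`, `t`. -/
lemma move {G : Type*} [Group G] (z u t : G) (a b c : ℤ) (hut : Commute u t)
    (h1 : z * u = u ^ a * z) (h2 : z * t = u ^ b * t ^ c * z) (i j : ℤ) :
    z * (u ^ i * t ^ j) = u ^ (a * i + b * j) * t ^ (c * j) * z := by
  have s1 : SemiconjBy z u (u ^ a) := h1
  have s2 : SemiconjBy z t (u ^ b * t ^ c) := h2
  have h := (s1.zpow_right i).mul_right (s2.zpow_right j)
  have hc : Commute (u ^ b) (t ^ c) := (hut.zpow_left b).zpow_right c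
  rw [hc.mul_zpow, ← zpow_mul, ← zpow_mul, ← zpow_mul, ← mul_assoc, ← zpow_add] at h
  exact h

/-- Every element has the form `u^i t^j x^e y^k`. -/
def NF {G : Type*} [Group G] (x y u t : G) (g : G) : Prop :=
  ∃ i j k : ℤ, g = u ^ i * t ^ j * y ^ k ∨ g = u ^ i * t ^ j * (x * y ^ k)

section
variable {G : Type*} [Group G] (x y u t : G)

lemma NF_N (hut : Commute u t) (a b : ℤ) (g : G) (h : NF x y u t g) :
    NF x y u t (u ^ a * t ^ b * g) := by
  obtain ⟨i, j, k, h⟩ := h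
  have key : ∀ w, u ^ a * t ^ b * (u ^ i * t ^ j * w) = u ^ (a + i) * t ^ (b + j) * w := by
    intro w
    have hc : t ^ b * u ^ i = u ^ i * t ^ b := ((hut.zpow_left i).zpow_right b).symm
    rw [zpow_add, zpow_add]
    calc _ = u ^ a * (t ^ b * u ^ i) * t ^ j * w := by simp only [mul_assoc]
      _ = _ := by rw [hc]; simp only [mul_assoc]
  refine ⟨a + i, b + j, k, ?_⟩
  rcases h with rfl | rfl
  · left; exact key _
  · right; exact key _

lemma NF_left (hut : Commute u t) (z : G) (a b c : ℤ)
    (h1 : z * u = u ^ a * z) (h2 : z * t = u ^ b * t ^ c * z)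
    (hz : ∀ k : ℤ, NF x y u t (z * y ^ k) ∧ NF x y u t (z * (x * y ^ k)))
    (g : G) (h : NF x y u t g) : NF x y u t (z * g) := by
  obtain ⟨i, j, k, h⟩ := h
  rcases h with rfl | rfl
  · rw [← mul_assoc, move z u t a b c hut h1 h2, mul_assoc]
    exact NF_N x y u t hut _ _ _ (hz k).1
  · rw [← mul_assoc, move z u t a b c hut h1 h2, mul_assoc]
    exact NF_N x y u t hut _ _ _ (hz k).2

end

/-- The element `u = (xy)²`. -/
def su : S := (sx * sy) ^ 2

/-- The element `t = x²`. -/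
def st : S := sx ^ 2

lemma NF_all (g : S) : NF sx sy su st g := by
  obtain ⟨xu, yu, xt, yt, ut, yx⟩ := struct sx sy rel1 rel2 su st rfl rfl
  have hxx : sx * sx = st := (pow_two sx).symm
  have Hx : ∀ g, NF sx sy su st g → NF sx sy su st (sx * g) := by
    apply NF_left sx sy su st ut sx (-1) 0 1
    · simpa using xu
    · simpa using xt
    · intro k
      refine ⟨⟨0, 0, k, Or.inr (by simp)⟩, ⟨0, 1, k, Or.inl ?_⟩⟩
      rw [← mul_assoc, hxx]; simp
  have Hx' : ∀ g, NF sx sy su st g → NF sx sy su st (sx⁻¹ * g) := by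
    intro g hg
    have := NF_N sx sy su st ut 0 (-1) _ (Hx g hg)
    rw [← mul_assoc] at this
    have e : su ^ (0 : ℤ) * st ^ (-1 : ℤ) * sx = sx⁻¹ := by rw [← hxx]; simp
    rwa [e] at this
  have yiu : sy⁻¹ * su = su⁻¹ * sy⁻¹ := by
    rw [inv_mul_eq_iff_eq_mul, ← mul_assoc]
    have : sy * su⁻¹ = su * sy := by
      rw [mul_inv_eq_iff_eq_mul, mul_assoc, yu]; simp
    rw [this]; simp
  have yit : sy⁻¹ * st = su ^ (2 : ℤ) * st ^ (-1 : ℤ) * sy⁻¹ := by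
    have := move sy su st (-1) (-2) (-1) ut (by simpa using yu)
      (by rw [yt]; simp [zpow_neg, zpow_ofNat, pow_two]) 2 (-1)
    rw [inv_mul_eq_iff_eq_mul, ← mul_assoc, this]; simp
  have Hy : ∀ g, NF sx sy su st g → NF sx sy su st (sy * g) := by
    apply NF_left sx sy su st ut sy (-1) (-2) (-1)
    · simpa using yu
    · rw [yt]; simp [zpow_neg, zpow_ofNat, pow_two]
    · intro k
      refine ⟨⟨0, 0, k + 1, Or.inl (by simp [zpow_add, zpow_one, ← zpow_one_add, add_comm])⟩,
        ⟨-1, -1, k - 1, Or.inr ?_⟩⟩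
      rw [← mul_assoc, yx, sub_eq_neg_add, zpow_add]; simp [mul_assoc]
  have yix : sy⁻¹ * sx = su * st⁻¹ * (sx * sy) := by
    have e : (sx * sy) * (sx * sy) = su := (pow_two _).symm
    have e' : sy⁻¹ * sx⁻¹ = su⁻¹ * (sx * sy) := by
      rw [← e]; simp [mul_assoc]
    have e2 : sy⁻¹ * sx = (sy⁻¹ * st) * sx⁻¹ := by rw [← hxx]; simp [mul_assoc]
    have c : Commute su st⁻¹ := (show Commute su st from ut).inv_right
    rw [e2, yit, mul_assoc, e', zpow_neg_one, zpow_ofNat, pow_two]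
    calc su * su * st⁻¹ * (su⁻¹ * (sx * sy)) = su * (su * st⁻¹) * su⁻¹ * (sx * sy) := by
          simp only [mul_assoc]
      _ = _ := by rw [c.eq]; simp only [← mul_assoc]; rw [c.eq]; simp
  have Hy' : ∀ g, NF sx sy su st g → NF sx sy su st (sy⁻¹ * g) := by
    apply NF_left sx sy su st ut sy⁻¹ (-1) 2 (-1)
    · simpa using yiu
    · exact yit
    · intro k
      refine ⟨⟨0, 0, k - 1, Or.inl ?_⟩, ⟨1, -1, k + 1, Or.inr ?_⟩⟩
      · rw [sub_eq_neg_add, zpow_add]; simp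
      · rw [← mul_assoc, yix, add_comm k 1, zpow_add]; simp [mul_assoc]
  exact S_induction _ ⟨0, 0, 0, Or.inl (by simp)⟩ Hx Hx' Hy Hy' g

lemma py_zpow (k : ℤ) (v : ℤ × ℤ × ℤ) : ((py ^ k) v).2.2 = v.2.2 + k := by
  induction k using Int.induction_on with
  | zero => simp
  | succ k ih =>
    rw [add_comm, zpow_add, Equiv.Perm.mul_apply, zpow_one]
    show ((py ^ (k : ℤ)) v).2.2 + 1 = _
    rw [ih]; ring
  | pred k ih =>
    rw [sub_eq_neg_add, zpow_add, Equiv.Perm.mul_apply, zpow_neg_one]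
    show ((py ^ (-k : ℤ)) v).2.2 - 1 = _
    rw [ih]; ring

lemma phi_u (i j k : ℤ) : phi su (i, j, k) = (i + 2, j, k) := by
  simp only [su, map_pow, map_mul, phi_x, phi_y, pow_two, Equiv.Perm.mul_apply, px_apply, py_apply]
  ext <;> simp <;> ring

lemma phi_t (i j k : ℤ) : phi st (i, j, k) = (i - 4 * k, j + 2, k) := by
  simp only [st, map_mul, phi_x, pow_two, Equiv.Perm.mul_apply, px_apply, Prod.mk.injEq]
  refine ⟨?_, ?_, ?_⟩ <;> ring

lemma zpow_drift {X : Type*} (h : Equiv.Perm X) (f : X → ℤ) (c : ℤ)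
    (hf : ∀ v, f (h v) = f v + c) (n : ℤ) : ∀ v, f ((h ^ n) v) = f v + n * c := by
  have hinv : ∀ v, f (h⁻¹ v) = f v - c := by
    intro v
    have := hf (h⁻¹ v)
    rw [← Equiv.Perm.mul_apply, mul_inv_cancel, Equiv.Perm.one_apply] at this
    omega
  induction n using Int.induction_on with
  | zero => simp
  | succ k ih =>
    intro v
    rw [zpow_add, Equiv.Perm.mul_apply, zpow_one, ih, hf]; ring
  | pred k ih =>
    intro v
    rw [sub_eq_add_neg, zpow_add, Equiv.Perm.mul_apply, zpow_neg_one, ih, hinv]; ring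

lemma phi_inj (g : S) (hg : phi g = 1) : g = 1 := by
  have u3 := zpow_drift (phi su) (fun v => v.2.2) 0 (by rintro ⟨i, j, k⟩; simp [phi_u])
  have t3 := zpow_drift (phi st) (fun v => v.2.2) 0 (by rintro ⟨i, j, k⟩; simp [phi_t])
  have u2 := zpow_drift (phi su) (fun v => v.2.1) 0 (by rintro ⟨i, j, k⟩; simp [phi_u])
  have t2 := zpow_drift (phi st) (fun v => v.2.1) 2 (by rintro ⟨i, j, k⟩; simp [phi_t])
  have u1 := zpow_drift (phi su) (fun v => v.1) 2 (by rintro ⟨i, j, k⟩; simp [phi_u])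
  have px3 : ∀ v, (px v).2.2 = - v.2.2 := fun v => rfl
  obtain ⟨i, j, k, h | h⟩ := NF_all g
  · have H : ∀ v, (phi su ^ i) ((phi st ^ j) ((py ^ k) v)) = v := by
      intro v
      have := congrArg (fun p : Equiv.Perm _ => p v) hg
      rw [h] at this
      simpa only [map_mul, map_zpow, phi_y, Equiv.Perm.mul_apply, Equiv.Perm.one_apply] using this
    have hk := congrArg (fun v => v.2.2) (H (0, 0, 0))
    simp only [u3, t3, py_zpow] at hk
    have hk0 : k = 0 := by omega
    subst hk0
    have hj := congrArg (fun v => v.2.1) (H (0, 0, 0))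
    simp only [u2, t2, zpow_zero, Equiv.Perm.one_apply] at hj
    have hj0 : j = 0 := by omega
    subst hj0
    have hi := congrArg (fun v => v.1) (H (0, 0, 0))
    simp only [u1, zpow_zero, Equiv.Perm.one_apply] at hi
    have hi0 : i = 0 := by omega
    subst hi0
    simpa using h
  · exfalso
    have H : ∀ v, (phi su ^ i) ((phi st ^ j) (px ((py ^ k) v))) = v := by
      intro v
      have := congrArg (fun p : Equiv.Perm _ => p v) hg
      rw [h] at this
      simpa only [map_mul, map_zpow, phi_x, phi_y, Equiv.Perm.mul_apply, Equiv.Perm.one_apply]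
        using this
    have h0 := congrArg (fun v => v.2.2) (H (0, 0, 0))
    have h1 := congrArg (fun v => v.2.2) (H (0, 0, 1))
    simp only [u3, t3, px3, py_zpow] at h0 h1
    omega

/-- The group `S` is torsion-free: every element of finite order is the identity. -/
theorem S_torsion_free : ∀ g : S, IsOfFinOrder g → g = 1 := by
  intro g hg
  exact phi_inj g (phi_torsion g (phi.isOfFinOrder hg))
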